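/- (Feasibility enhancement) Let π and π′ be policies such that (i) for every x ∈ X^π, F^π(f(x, π′(x))) = 0, and (ii) for every x ∉ X^π and every u ∈ 𝒰, F^π(f(x, π′(x))) ≤ F^π(f(x, u)). Then F^{π′}(x) ≤ F^π(x) for every x ∈ 𝒳. -/

import Mathlib

/-!
`F^π` satisfies a Bellman-type equation: `F^π(x) = 1` when `h x > 0`, and
`F^π(x) = γ F^π(f(x, π(x)))` otherwise (`Fcdf_of_pos`, `Fcdf_of_nonpos`). The hypotheses on `π'`
together give `F^π(f(x, π'(x))) ≤ F^π(f(x, π(x)))` at every state, so `F^π` is a supersolution of the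
equation for `π'`. Unrolling this `t` times along a trajectory of `π'` that violates the constraint
at time `t` yields `γ ^ t ≤ F^π(x)`; at the first violation time the left side is `F^{π'}(x)`.
-/

open scoped Classical

variable {X U : Type*}

/-- Trajectory from `x` under policy `π`: `x₀ = x`, `x_{t+1} = f xₜ (π xₜ)`. -/
def traj (f : X → U → X) (π : X → U) (x : X) : ℕ → X
  | 0 => x
  | t + 1 => f (traj f π x t) (π (traj f π x t))

/-- Constraint indicator: `c(x) = 1` if `h x > 0`, else `0`. -/
noncomputable def cInd (h : X → ℝ) (x : X) : ℝ := if h x > 0 then 1 else 0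

/-- Constraint decay function `F^π(x) = γ ^ (N^π x)` with `γ ^ ∞ := 0`,
where `N^π x` is the least `t` with `h (xₜ) > 0` along the trajectory. -/
noncomputable def Fcdf (f : X → U → X) (h : X → ℝ) (γ : ℝ) (π : X → U) (x : X) : ℝ :=
  if hx : ∃ t, h (traj f π x t) > 0 then γ ^ Nat.find hx else 0

/-- Feasible region of a policy `π`. -/
def Xfeas (f : X → U → X) (h : X → ℝ) (π : X → U) : Set X :=
  {x | ∀ t, h (traj f π x t) ≤ 0}

/-- Maximum feasible region. -/
def Xstar (f : X → U → X) (h : X → ℝ) : Set X :=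
  {x | ∃ π : X → U, x ∈ Xfeas f h π}

/-- Optimal constraint decay function: infimum of `F^π` over all policies. -/
noncomputable def Fstar (f : X → U → X) (h : X → ℝ) (γ : ℝ) (x : X) : ℝ :=
  ⨅ π : X → U, Fcdf f h γ π x

/-- State-value function of a policy. -/
noncomputable def Vval (f : X → U → X) (r : X → U → ℝ) (γ : ℝ) (π : X → U) (x : X) : ℝ :=
  ∑' t : ℕ, γ ^ t * r (traj f π x t) (π (traj f π x t))

/-- Optimal state-value function: max of `V^π` over policies whose feasible
region equals the maximum feasible region. -/
noncomputable def Vstar (f : X → U → X) (h : X → ℝ) (r : X → U → ℝ) (γ : ℝ) (x : X) : ℝ :=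
  ⨆ π : {π : X → U // Xfeas f h π = Xstar f h}, Vval f r γ π.1 x

theorem traj_succ_eq (f : X → U → X) (π : X → U) (x : X) (t : ℕ) :
    traj f π x (t + 1) = traj f π (f x (π x)) t := by
  induction t with
  | zero => rfl
  | succ t ih =>
    rw [traj, ih, traj]

theorem Fcdf_nonneg (f : X → U → X) (h : X → ℝ) {γ : ℝ} (hγ0 : 0 < γ) (π : X → U) (x : X) :
    0 ≤ Fcdf f h γ π x := by
  unfold Fcdf
  split_ifs
  · positivity
  · exact le_rfl

theorem Fcdf_of_pos (f : X → U → X) (h : X → ℝ) (γ : ℝ) (π : X → U) {x : X} (hx : 0 < h x) :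
    Fcdf f h γ π x = 1 := by
  have hex : ∃ t, h (traj f π x t) > 0 := ⟨0, hx⟩
  have h_find : Nat.find hex = 0 := (Nat.find_eq_zero hex).2 hx
  rw [Fcdf, dif_pos hex, h_find, pow_zero]

theorem Fcdf_of_nonpos (f : X → U → X) (h : X → ℝ) (γ : ℝ) (π : X → U) {x : X} (hx : h x ≤ 0) :
    Fcdf f h γ π x = γ * Fcdf f h γ π (f x (π x)) := by
  by_cases hex : ∃ t, h (traj f π (f x (π x)) t) > 0
  · have hex₁ : ∃ t, h (traj f π x (t + 1)) > 0 := by simpa only [traj_succ_eq] using hex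
    have hex₀ : ∃ t, h (traj f π x t) > 0 := hex₁.imp' (· + 1) fun _ ht => ht
    have h_find : Nat.find hex₀ = Nat.find hex + 1 := by
      rw [Nat.find_comp_succ hex₀ hex₁ (not_lt.2 hx)]
      simp only [traj_succ_eq]
    rw [Fcdf, Fcdf, dif_pos hex₀, dif_pos hex, h_find, pow_succ']
  · have hex₀ : ¬ ∃ t, h (traj f π x t) > 0 := by
      rintro ⟨_ | t, ht⟩
      · exact not_lt.2 hx ht
      · exact hex ⟨t, by rwa [traj_succ_eq] at ht⟩
    rw [Fcdf, Fcdf, dif_neg hex₀, dif_neg hex, mul_zero]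

/-- If one step of `π'` is never worse for `F^π` than one step of `π`, then a violation at time `t`
under `π'`, not necessarily the first one, bounds `F^π` from below by `γ ^ t`. -/
theorem pow_le_Fcdf_of_violation (f : X → U → X) (h : X → ℝ) {γ : ℝ} (hγ0 : 0 < γ) (hγ1 : γ < 1)
    (π π' : X → U) (hstep : ∀ x, Fcdf f h γ π (f x (π' x)) ≤ Fcdf f h γ π (f x (π x)))
    (t : ℕ) (x : X) (ht : 0 < h (traj f π' x t)) : γ ^ t ≤ Fcdf f h γ π x := by
  induction t generalizing x with
  | zero => rw [Fcdf_of_pos f h γ π (x := x) ht, pow_zero]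
  | succ t ih =>
    rcases lt_or_ge 0 (h x) with hx | hx
    · rw [Fcdf_of_pos f h γ π hx]
      exact pow_le_one₀ hγ0.le hγ1.le
    · rw [traj_succ_eq] at ht
      rw [Fcdf_of_nonpos f h γ π hx, pow_succ']
      exact mul_le_mul_of_nonneg_left ((ih _ ht).trans (hstep x)) hγ0.le

/-- Feasibility enhancement: the CDF of the improved policy `π'`
is pointwise no greater than the CDF of `π`. -/
theorem feasibility_enhancement (f : X → U → X) (h : X → ℝ) (γ : ℝ)
    (hγ0 : 0 < γ) (hγ1 : γ < 1) (π π' : X → U)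
    (h1 : ∀ x ∈ Xfeas f h π, Fcdf f h γ π (f x (π' x)) = 0)
    (h2 : ∀ x ∉ Xfeas f h π, ∀ u : U,
      Fcdf f h γ π (f x (π' x)) ≤ Fcdf f h γ π (f x u)) :
    ∀ x : X, Fcdf f h γ π' x ≤ Fcdf f h γ π x := by
  have hstep : ∀ x, Fcdf f h γ π (f x (π' x)) ≤ Fcdf f h γ π (f x (π x)) := by
    intro x
    by_cases hx : x ∈ Xfeas f h π
    · exact (h1 x hx).trans_le (Fcdf_nonneg f h hγ0 π _)
    · exact h2 x hx (π x)
  intro x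
  by_cases hex : ∃ t, h (traj f π' x t) > 0
  · rw [Fcdf, dif_pos hex]
    exact pow_le_Fcdf_of_violation f h hγ0 hγ1 π π' hstep _ x (Nat.find_spec hex)
  · rw [Fcdf, dif_neg hex]
    exact Fcdf_nonneg f h hγ0 π x
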